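/- For every even natural number n ≥ 2, the Orchard crossing number of the star graph K_{n,1} equals n(n−2)²/8. -/

import Mathlib

set_option linter.unusedSectionVars false

/-!
Common definitions for the Orchard crossing number
(Feder–Garber, "The Orchard crossing number of an abstract graph").
-/

noncomputable section

/-- Points of the plane. -/
abbrev Pt : Type := ℝ × ℝ

/-- The line through two points of the plane. -/
def lineThrough (p q : Pt) : Set Pt := (affineSpan ℝ ({p, q} : Set Pt) : Set Pt)

/-- A line (or any set) `L` separates the points `P` and `Q` if both lie off `L`
and they lie in different connected components of the complement of `L`. -/
def Separates (L : Set Pt) (P Q : Pt) : Prop :=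
  P ∉ L ∧ Q ∉ L ∧ connectedComponentIn Lᶜ P ≠ connectedComponentIn Lᶜ Q

theorem Separates.symm {L : Set Pt} {P Q : Pt} (h : Separates L P Q) : Separates L Q P :=
  ⟨h.2.1, h.1, h.2.2.symm⟩

/-- A generic configuration: a finite set of points, no three of which are collinear. -/
def GenericConfig (S : Set Pt) : Prop :=
  S.Finite ∧ ∀ p ∈ S, ∀ q ∈ S, ∀ r ∈ S, p ≠ q → p ≠ r → q ≠ r →
    ¬ Collinear ℝ ({p, q, r} : Set Pt)

/-- A finite set of points is in convex position if every point of it is an extreme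
point of its convex hull, i.e. lies outside the convex hull of the other points. -/
def ConvexPosition (S : Set Pt) : Prop :=
  ∀ p ∈ S, p ∉ convexHull ℝ (S \ {p})

variable {V : Type*} [Fintype V] [DecidableEq V]

/-- A rectilinear drawing of a graph on vertex set `V`: an injective placement of the
vertices in the plane whose image is a generic configuration. -/
def IsRectDrawing (f : V → Pt) : Prop :=
  Function.Injective f ∧ GenericConfig (Set.range f)

/-- `sepCount f s t` is `n(s,t)`: the number of (unordered) pairs of vertices, both
different from `s` and `t`, whose drawn points span a line separating `f s` from `f t`. -/
def sepCount (f : V → Pt) (s t : V) : ℕ :=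
  Set.ncard {e : Finset V | ∃ a b : V, e = {a, b} ∧ a ≠ b ∧ s ∉ e ∧ t ∉ e ∧
    Separates (lineThrough (f a) (f b)) (f s) (f t)}

theorem sepCount_symm (f : V → Pt) (s t : V) : sepCount f s t = sepCount f t s := by
  unfold sepCount
  congr 1
  ext e
  constructor
  · rintro ⟨a, b, rfl, hab, hs, ht, hsep⟩
    exact ⟨a, b, rfl, hab, ht, hs, hsep.symm⟩
  · rintro ⟨a, b, rfl, hab, ht, hs, hsep⟩
    exact ⟨a, b, rfl, hab, hs, ht, hsep.symm⟩

/-- The crossing number `n(R(G))` of a drawing: the sum of `n(s,t)` over all edges. -/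
def drawingCrossings (G : SimpleGraph V) (f : V → Pt) : ℕ :=
  ∑ e ∈ G.edgeSet.toFinite.toFinset,
    Sym2.lift ⟨fun s t => sepCount f s t, fun s t => sepCount_symm f s t⟩ e

/-- The Orchard crossing number: the minimum of `n(R(G))` over all rectilinear drawings. -/
def OCN (G : SimpleGraph V) : ℕ :=
  sInf {n | ∃ f : V → Pt, IsRectDrawing f ∧ drawingCrossings G f = n}

/-- The maximal Orchard crossing number: the maximum of `n(R(G))` over all drawings. -/
def MOCN (G : SimpleGraph V) : ℕ :=
  sSup {n | ∃ f : V → Pt, IsRectDrawing f ∧ drawingCrossings G f = n}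

/-- The open segment drawn for an edge. -/
def edgeSeg (f : V → Pt) (e : Sym2 V) : Set Pt :=
  Sym2.lift ⟨fun a b => openSegment ℝ (f a) (f b), fun a b => openSegment_symm ℝ (f a) (f b)⟩ e

/-- The number of unordered pairs of distinct edges of `G` whose drawn open segments
intersect. -/
def crossPairs (G : SimpleGraph V) (f : V → Pt) : ℕ :=
  Set.ncard {p : Finset (Sym2 V) | ∃ e₁ e₂ : Sym2 V, p = {e₁, e₂} ∧ e₁ ≠ e₂ ∧
    e₁ ∈ G.edgeSet ∧ e₂ ∈ G.edgeSet ∧ (edgeSeg f e₁ ∩ edgeSeg f e₂).Nonempty}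

/-- The rectilinear crossing number: the minimum number of crossing pairs of edges
over all rectilinear drawings. -/
def rcr (G : SimpleGraph V) : ℕ :=
  sInf {n | ∃ f : V → Pt, IsRectDrawing f ∧ crossPairs G f = n}

/-- The number of 4-element subsets of the drawn points which are in convex position. -/
def convexFour (f : V → Pt) : ℕ :=
  Set.ncard {Q : Finset Pt | Q.card = 4 ∧ (Q : Set Pt) ⊆ Set.range f ∧
    ConvexPosition (Q : Set Pt)}

/-- The cyclic successor on `Fin n`. -/
def nextFin {n : ℕ} (i : Fin n) : Fin n :=
  ⟨(i.val + 1) % n, Nat.mod_lt _ (Nat.zero_lt_of_lt i.isLt)⟩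

/-- The star graph `K_{n,1}` on `n+1` vertices: the center `0` is joined to each of
the `n` outer vertices. -/
def starGraph (n : ℕ) : SimpleGraph (Fin (n + 1)) :=
  SimpleGraph.fromEdgeSet {e | ∃ i : Fin n, e = s((0 : Fin (n + 1)), i.succ)}

/-- The wheel graph `W_{n,1}` on `n+1` vertices: a cycle on the `n` outer vertices
together with a hub `0` joined to each of them. -/
def wheelGraph (n : ℕ) : SimpleGraph (Fin (n + 1)) :=
  SimpleGraph.fromEdgeSet
    ({e | ∃ i : Fin n, e = s((0 : Fin (n + 1)), i.succ)} ∪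
     {e | ∃ i : Fin n, e = s(i.succ, (nextFin i).succ)})

/-- The cycle graph `C_n` on the outer vertices `1, …, n` of `Fin (n+1)`, together
with the isolated vertex `0`. -/
def cycleWithIsolated (n : ℕ) : SimpleGraph (Fin (n + 1)) :=
  SimpleGraph.fromEdgeSet {e | ∃ i : Fin n, e = s(i.succ, (nextFin i).succ)}

/-- `HullCycle f` says that for every `i`, all the other drawn points lie (strictly) on
one side of the line through `f i` and `f (i+1)`; for an injective generic placement this
means the points are in convex position and occur around the convex hull exactly in the
cyclic order `f 0, f 1, …`. -/
def HullCycle {m : ℕ} (f : Fin m → Pt) : Prop :=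
  ∀ i j l : Fin m, j ≠ i → j ≠ nextFin i → l ≠ i → l ≠ nextFin i →
    ¬ Separates (lineThrough (f i) (f (nextFin i))) (f j) (f l)

end

/-- Twice the signed area of the triangle `p q r`. -/
noncomputable def signedArea (p q r : Pt) : ℝ :=
  (q.1 - p.1) * (r.2 - p.2) - (q.2 - p.2) * (r.1 - p.1)

theorem mem_lineThrough_iff {p q : Pt} (hpq : p ≠ q) (x : Pt) :
    x ∈ lineThrough p q ↔ signedArea p q x = 0 := by
  unfold lineThrough signedArea
  rw [SetLike.mem_coe, mem_affineSpan_pair_iff_exists_lineMap_eq]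
  constructor
  · rintro ⟨r, rfl⟩
    simp only [AffineMap.lineMap_apply, vsub_eq_sub, vadd_eq_add, Prod.fst_add, Prod.snd_add,
      Prod.smul_fst, Prod.smul_snd, Prod.fst_sub, Prod.snd_sub, smul_eq_mul]
    ring
  · intro h
    have hne : q.1 - p.1 ≠ 0 ∨ q.2 - p.2 ≠ 0 := by
      by_contra! hc
      exact hpq (Prod.ext (by linarith [hc.1]) (by linarith [hc.2]))
    rcases hne with h1 | h1
    · refine ⟨(x.1 - p.1) / (q.1 - p.1), ?_⟩
      ext
      · simp only [AffineMap.lineMap_apply, vsub_eq_sub, vadd_eq_add, Prod.fst_add,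
          Prod.smul_fst, Prod.fst_sub, smul_eq_mul]
        field_simp
        ring
      · simp only [AffineMap.lineMap_apply, vsub_eq_sub, vadd_eq_add, Prod.snd_add,
          Prod.smul_snd, Prod.snd_sub, smul_eq_mul]
        field_simp
        linear_combination -h
    · refine ⟨(x.2 - p.2) / (q.2 - p.2), ?_⟩
      ext
      · simp only [AffineMap.lineMap_apply, vsub_eq_sub, vadd_eq_add, Prod.fst_add,
          Prod.smul_fst, Prod.fst_sub, smul_eq_mul]
        field_simp
        linear_combination h
      · simp only [AffineMap.lineMap_apply, vsub_eq_sub, vadd_eq_add, Prod.snd_add,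
          Prod.smul_snd, Prod.snd_sub, smul_eq_mul]
        field_simp
        ring

theorem collinear_iff_signedArea_eq_zero {p q : Pt} (hpq : p ≠ q) (r : Pt) :
    Collinear ℝ ({p, q, r} : Set Pt) ↔ signedArea p q r = 0 := by
  rw [← mem_lineThrough_iff hpq]
  constructor
  · intro h
    exact h.mem_affineSpan_of_mem_of_ne (by simp) (by simp) (by simp) hpq
  · intro h
    have h' : Collinear ℝ ({r, p, q} : Set Pt) :=
      (collinear_insert_iff_of_mem_affineSpan h).2 (collinear_pair ℝ p q)
    refine h'.subset ?_
    rintro y (rfl | rfl | rfl) <;> simp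

theorem continuous_signedArea (p q : Pt) : Continuous (signedArea p q) := by
  unfold signedArea
  fun_prop

theorem convex_signedArea_pos (p q : Pt) (c : ℝ) : Convex ℝ {x | 0 < c * signedArea p q x} := by
  intro x hx y hy a b ha hb hab
  simp only [Set.mem_ofPred_eq] at *
  have key : c * signedArea p q (a • x + b • y)
      = a * (c * signedArea p q x) + b * (c * signedArea p q y) := by
    simp only [signedArea, Prod.fst_add, Prod.snd_add, Prod.smul_fst, Prod.smul_snd, smul_eq_mul]
    obtain rfl : b = 1 - a := by linarith
    ring
  rw [key]
  rcases ha.eq_or_lt with rfl | ha'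
  · obtain rfl : b = 1 := by linarith
    simpa using hy
  · have := mul_pos ha' hx
    have := mul_nonneg hb hy.le
    linarith

theorem separates_lineThrough_iff {p q : Pt} (hpq : p ≠ q) (x y : Pt) :
    Separates (lineThrough p q) x y ↔ signedArea p q x * signedArea p q y < 0 := by
  unfold Separates
  rw [mem_lineThrough_iff hpq, mem_lineThrough_iff hpq]
  constructor
  · rintro ⟨hx, hy, hne⟩
    by_contra! hnn
    have hpos : 0 < signedArea p q x * signedArea p q y :=
      lt_of_le_of_ne hnn (mul_ne_zero hx hy).symm
    refine hne (connectedComponentIn_eq ?_)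
    have hpre := (convex_signedArea_pos p q (signedArea p q x)).isPreconnected
    refine hpre.subset_connectedComponentIn (mul_self_pos.2 hx) ?_ hpos
    intro z hz hzL
    rw [mem_lineThrough_iff hpq] at hzL
    simp [hzL] at hz
  · intro h
    have hx : signedArea p q x ≠ 0 := fun h0 => by simp [h0] at h
    have hy : signedArea p q y ≠ 0 := fun h0 => by simp [h0] at h
    refine ⟨hx, hy, fun heq => ?_⟩
    have hxc : x ∈ (lineThrough p q)ᶜ := fun hm => hx ((mem_lineThrough_iff hpq x).1 hm)
    have hyc : y ∈ (lineThrough p q)ᶜ := fun hm => hy ((mem_lineThrough_iff hpq y).1 hm)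
    have hxm := mem_connectedComponentIn hxc
    have hym := mem_connectedComponentIn hyc
    rw [← heq] at hym
    have hpre : IsPreconnected (connectedComponentIn (lineThrough p q)ᶜ x) :=
      isPreconnected_connectedComponentIn
    have hcont := (continuous_signedArea p q).continuousOn
      (s := connectedComponentIn (lineThrough p q)ᶜ x)
    have hzero : ∃ z ∈ connectedComponentIn (lineThrough p q)ᶜ x, signedArea p q z = 0 := by
      rcases mul_neg_iff.1 h with ⟨h1, h2⟩ | ⟨h1, h2⟩
      · exact hpre.intermediate_value hym hxm hcont ⟨h2.le, h1.le⟩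
      · exact hpre.intermediate_value hxm hym hcont ⟨h1.le, h2.le⟩
    obtain ⟨z, hz, hz0⟩ := hzero
    exact connectedComponentIn_subset _ _ hz ((mem_lineThrough_iff hpq z).2 hz0)

section Counting

variable {n : ℕ} (E : Fin n → Fin n → ℝ)

/-- The number of indices `j` with `E i j` positive. -/
noncomputable def posCount (i : Fin n) : ℕ := {j | 0 < E i j}.ncard

/-- The indicator that the side `a b` separates the origin from `t`, where `E` records the
signed areas of the triangles spanned by the origin and two points. -/
noncomputable def sepInd (a b t : Fin n) : ℕ :=
  open Classical in if E a b * (E a b + E b t + E t a) < 0 then 1 else 0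

/-- The indicator that `j` and `l` are distinct and both on the positive side of `i`. -/
noncomputable def leftInd (i j l : Fin n) : ℕ :=
  open Classical in if j ≠ l ∧ 0 < E i j ∧ 0 < E i l then 1 else 0

theorem sum_cyclic (F : Fin n → Fin n → Fin n → ℕ) :
    ∑ a, ∑ b, ∑ t, (F a b t + F b t a + F t a b) = 3 * ∑ a, ∑ b, ∑ t, F a b t := by
  have hrot (F : Fin n → Fin n → Fin n → ℕ) :
      ∑ a, ∑ b, ∑ t, F b t a = ∑ a, ∑ b, ∑ t, F a b t := by
    rw [Finset.sum_comm]
    exact Finset.sum_congr rfl fun a _ => Finset.sum_comm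
  have h1 := hrot F
  have h2 := hrot fun a b t => F t a b
  simp only [Finset.sum_add_distrib, h1, ← h2]
  ring

variable {E}

theorem leftInd_cyclic_le_sepInd_cyclic (hE : ∀ i j, E j i = -E i j)
    (hE0 : ∀ i j, i ≠ j → E i j ≠ 0)
    (hS : ∀ i j l, i ≠ j → i ≠ l → j ≠ l → E i j + E j l + E l i ≠ 0) (a b t : Fin n) :
    leftInd E a b t + leftInd E b t a + leftInd E t a b ≤
      sepInd E a b t + sepInd E b t a + sepInd E t a b := by
  have hd : ∀ i, E i i = 0 := fun i => by linarith [hE i i]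
  by_cases hab : a = b
  · subst hab; simp [leftInd, hd]
  by_cases hat : a = t
  · subst hat; simp [leftInd, hd]
  by_cases hbt : b = t
  · subst hbt; simp [leftInd, hd]
  have hx := hE0 a b hab
  have hy := hE0 b t hbt
  have hz := hE0 t a (Ne.symm hat)
  have hs := hS a b t hab hat hbt
  have e1 : E b t + E t a + E a b = E a b + E b t + E t a := by ring
  have e2 : E t a + E a b + E b t = E a b + E b t + E t a := by ring
  simp only [leftInd, sepInd, e1, e2, hE t a, hE a b, hE b t, ne_eq, hab, hbt, Ne.symm hat,
    not_false_eq_true, true_and, mul_neg_iff, Left.neg_pos_iff]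
  generalize hsx : E a b + E b t + E t a = s at *
  generalize E a b = x at *
  generalize E b t = y at *
  generalize E t a = z at *
  rcases hx.lt_or_gt with h1 | h1 <;> rcases hy.lt_or_gt with h2 | h2 <;>
    rcases hz.lt_or_gt with h3 | h3 <;> rcases hs.lt_or_gt with h4 | h4 <;>
    simp [h1, h2, h3, h4, h1.not_gt, h2.not_gt, h3.not_gt, h4.not_gt]

theorem sepInd_cyclic_eq_leftInd_cyclic (hE : ∀ i j, E j i = -E i j)
    (hE0 : ∀ i j, i ≠ j → E i j ≠ 0)
    (hS : ∀ i j l, 0 < E i j → 0 < E j l → 0 < E i l → 0 < E i j + E j l + E l i)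
    (a b t : Fin n) :
    sepInd E a b t + sepInd E b t a + sepInd E t a b =
      leftInd E a b t + leftInd E b t a + leftInd E t a b := by
  have hd : ∀ i, E i i = 0 := fun i => by linarith [hE i i]
  by_cases hab : a = b
  · subst hab; simp [leftInd, sepInd, hd, hE a t]
  by_cases hat : a = t
  · subst hat; simp [leftInd, sepInd, hd, hE a b]
  by_cases hbt : b = t
  · subst hbt; simp [leftInd, sepInd, hd, hE a b]
  have hx := hE0 a b hab
  have hy := hE0 b t hbt
  have hz := hE0 t a (Ne.symm hat)
  have s1 := hS a b t
  have s2 := hS b t a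
  have s3 := hS t a b
  have s4 := hS t b a
  have s5 := hS b a t
  have s6 := hS a t b
  have e1 : E b t + E t a + E a b = E a b + E b t + E t a := by ring
  have e2 : E t a + E a b + E b t = E a b + E b t + E t a := by ring
  simp only [hE t a, hE a b, hE b t] at s1 s2 s3 s4 s5 s6
  simp only [leftInd, sepInd, e1, e2, hE t a, hE a b, hE b t, ne_eq, hab, hbt, Ne.symm hat,
    not_false_eq_true, true_and, mul_neg_iff, Left.neg_pos_iff]
  generalize E a b = x at *
  generalize E b t = y at *
  generalize E t a = z at *
  rcases hx.lt_or_gt with h1 | h1 <;> rcases hy.lt_or_gt with h2 | h2 <;>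
    rcases hz.lt_or_gt with h3 | h3 <;>
    · have hs : x + y + z < 0 ∨ 0 < x + y + z := by grind
      simp [h1, h2, h3, h1.not_gt, h2.not_gt, h3.not_gt]
      grind

theorem sum_leftInd (E : Fin n → Fin n → ℝ) (i : Fin n) :
    ∑ j, ∑ l, leftInd E i j l = posCount E i * (posCount E i - 1) := by
  classical
  have hp : posCount E i = (Finset.univ.filter fun j => 0 < E i j).card := by
    rw [posCount, ← Set.ncard_coe_finset]
    simp
  rw [hp, Nat.mul_sub_one, ← Finset.offDiag_card, ← Fintype.sum_prod_type']
  simp only [leftInd]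
  rw [← Finset.card_filter]
  congr 1
  ext ⟨j, l⟩
  simp [Finset.mem_offDiag]
  tauto

theorem two_mul_sum_posCount (hE : ∀ i j, E j i = -E i j) (hE0 : ∀ i j, i ≠ j → E i j ≠ 0) :
    2 * ∑ i, posCount E i = n * (n - 1) := by
  classical
  have hp : ∀ i, posCount E i = ∑ j, if 0 < E i j then 1 else 0 := fun i => by
    rw [← Finset.card_filter, posCount, ← Set.ncard_coe_finset]
    simp
  have hswap : ∑ i, posCount E i = ∑ i, ∑ j, if 0 < E j i then 1 else 0 := by
    rw [Finset.sum_comm]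
    exact Finset.sum_congr rfl fun i _ => hp i
  have hsum : ∀ i j : Fin n, ((if 0 < E i j then 1 else 0) + if 0 < E j i then 1 else 0 : ℕ) =
      if i ≠ j then 1 else 0 := fun i j => by
    have := hE i j
    have := hE0 i j
    split_ifs <;> grind
  rw [two_mul]
  conv_lhs => arg 2; rw [hswap]
  rw [Finset.sum_congr rfl fun i _ => hp i, ← Finset.sum_add_distrib]
  simp_rw [← Finset.sum_add_distrib, hsum, ← Finset.card_filter]
  simp [Finset.filter_ne]

theorem three_mul_sum_leftInd (E : Fin n → Fin n → ℝ) :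
    ∑ a, ∑ b, ∑ t, (leftInd E a b t + leftInd E b t a + leftInd E t a b) =
      3 * ∑ i, posCount E i * (posCount E i - 1) := by
  rw [sum_cyclic]
  simp_rw [sum_leftInd]

/-- Since the `2k` numbers `posCount E i` have average `(2k - 1) / 2`, convexity bounds the sum below;
equality holds if each of them is `k - 1` or `k`, see `sum_posCount_eq`. -/
theorem le_sum_posCount {k : ℕ} (hn : n = 2 * k) (hE : ∀ i j, E j i = -E i j)
    (hE0 : ∀ i j, i ≠ j → E i j ≠ 0) :
    2 * (k * (k - 1) ^ 2) ≤ ∑ i, posCount E i * (posCount E i - 1) := by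
  have h2 := two_mul_sum_posCount hE hE0
  rcases k with _ | k
  · simp
  subst hn
  have h3 : ∑ i, posCount E i = (k + 1) * (2 * k + 1) := by
    simp only [show 2 * (k + 1) - 1 = 2 * k + 1 by omega] at h2
    linarith
  have hpt : ∀ r : ℕ, 2 * k * r ≤ r * (r - 1) + k * (k + 1) := fun r => by
    rcases r with _ | r
    · simp
    simp only [Nat.add_sub_cancel]
    rcases le_total r k with h | h
    · rcases h.eq_or_lt with rfl | h
      · nlinarith
      · nlinarith
    · nlinarith
  have h4 := Finset.sum_le_sum fun (i : Fin (2 * (k + 1))) (_ : i ∈ Finset.univ) =>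
    hpt (posCount E i)
  rw [← Finset.mul_sum, h3, Finset.sum_add_distrib] at h4
  simp at h4 ⊢
  nlinarith

theorem sum_posCount_eq {k : ℕ} (hn : n = 2 * k) (hE : ∀ i j, E j i = -E i j)
    (hE0 : ∀ i j, i ≠ j → E i j ≠ 0) (hk : ∀ i, posCount E i = k ∨ posCount E i + 1 = k) :
    ∑ i, posCount E i * (posCount E i - 1) = 2 * (k * (k - 1) ^ 2) := by
  have h2 := two_mul_sum_posCount hE hE0
  rcases k with _ | k
  · subst hn; simp
  subst hn
  have h3 : ∑ i, posCount E i = (k + 1) * (2 * k + 1) := by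
    simp only [show 2 * (k + 1) - 1 = 2 * k + 1 by omega] at h2
    linarith
  have hpt : ∀ r : ℕ, r = k + 1 ∨ r + 1 = k + 1 → 2 * k * r = r * (r - 1) + k * (k + 1) := by
    rintro r (rfl | h)
    · simp; ring
    · obtain rfl : r = k := by omega
      rcases r with _ | r
      · simp
      · simp; ring
  have h4 := Finset.sum_congr rfl fun (i : Fin (2 * (k + 1))) (_ : i ∈ Finset.univ) =>
    hpt (posCount E i) (hk i)
  rw [← Finset.mul_sum, h3, Finset.sum_add_distrib] at h4
  simp at h4 ⊢
  nlinarith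

end Counting

section Drawing

variable {n : ℕ}

/-- The signed areas of the triangles spanned by the centre of the star and two leaves. -/
noncomputable def centralArea (f : Fin (n + 1) → Pt) (i j : Fin n) : ℝ :=
  signedArea (f 0) (f i.succ) (f j.succ)

theorem centralArea_swap (f : Fin (n + 1) → Pt) (i j : Fin n) :
    centralArea f j i = -centralArea f i j := by
  unfold centralArea signedArea
  ring

theorem centralArea_cyclic (f : Fin (n + 1) → Pt) (i j l : Fin n) :
    centralArea f i j + centralArea f j l + centralArea f l i =
      signedArea (f i.succ) (f j.succ) (f l.succ) := by
  unfold centralArea signedArea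
  ring

theorem IsRectDrawing.signedArea_ne_zero {V : Type*} {f : V → Pt}
    (hf : IsRectDrawing f) {i j l : V} (hij : i ≠ j) (hil : i ≠ l) (hjl : j ≠ l) :
    signedArea (f i) (f j) (f l) ≠ 0 := by
  rw [Ne, ← collinear_iff_signedArea_eq_zero (hf.1.ne hij)]
  exact hf.2.2 _ ⟨i, rfl⟩ _ ⟨j, rfl⟩ _ ⟨l, rfl⟩ (hf.1.ne hij) (hf.1.ne hil) (hf.1.ne hjl)

theorem two_mul_sepCount {f : Fin (n + 1) → Pt} (hf : Function.Injective f) (t : Fin n) :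
    2 * sepCount f 0 t.succ = ∑ a, ∑ b, sepInd (centralArea f) a b t := by
  classical
  set S : Finset (Fin n × Fin n) := Finset.univ.filter fun p =>
    centralArea f p.1 p.2 * (centralArea f p.1 p.2 + centralArea f p.2 t + centralArea f t p.1) < 0
    with hS
  have hsum : ∑ a, ∑ b, sepInd (centralArea f) a b t = S.card := by
    rw [← Fintype.sum_prod_type', hS, Finset.card_filter]
    rfl
  have hd : ∀ i, centralArea f i i = 0 := fun i => by linarith [centralArea_swap f i i]
  have hsymm : ∀ a b, (a, b) ∈ S → (b, a) ∈ S := fun a b h => by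
    simp only [hS, Finset.mem_filter, Finset.mem_univ, true_and] at h ⊢
    rw [centralArea_swap f a b, centralArea_swap f t a, centralArea_swap f b t]
    linarith
  have hne : ∀ a b, (a, b) ∈ S → a ≠ b ∧ a ≠ t ∧ b ≠ t := fun a b h => by
    simp only [hS, Finset.mem_filter, Finset.mem_univ, true_and] at h
    refine ⟨?_, ?_, ?_⟩
    · rintro rfl; simp [hd] at h
    · rintro rfl; simp [hd, centralArea_swap f a b] at h
    · rintro rfl; simp [hd, centralArea_swap f a b] at h
  let φ : Fin n × Fin n → Finset (Fin (n + 1)) := fun p => {p.1.succ, p.2.succ}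
  have hφ : ∀ a b c d : Fin n, φ (a, b) = φ (c, d) → a ≠ b →
      (a, b) = (c, d) ∨ (a, b) = (d, c) := fun a b c d h hab => by
    have h1 : a.succ ∈ φ (c, d) := by rw [← h]; simp [φ]
    have h2 : b.succ ∈ φ (c, d) := by rw [← h]; simp [φ]
    simp [φ] at h1 h2
    grind
  have hset : {e : Finset (Fin (n + 1)) | ∃ a b, e = {a, b} ∧ a ≠ b ∧ 0 ∉ e ∧ t.succ ∉ e ∧
      Separates (lineThrough (f a) (f b)) (f 0) (f t.succ)} = (S.image φ : Finset _) := by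
    ext e
    simp only [Set.mem_ofPred_eq, Finset.coe_image, Set.mem_image, Finset.mem_coe, Prod.exists]
    have key : ∀ a b : Fin n, a ≠ b → ((a, b) ∈ S ↔
        Separates (lineThrough (f a.succ) (f b.succ)) (f 0) (f t.succ)) := fun a b hab => by
      rw [separates_lineThrough_iff (hf.ne fun h => hab (Fin.succ_injective _ h)),
        ← centralArea_cyclic]
      have : signedArea (f a.succ) (f b.succ) (f 0) = centralArea f a b := by
        unfold centralArea signedArea; ring
      rw [this]
      simp [hS]
    constructor
    · rintro ⟨a, b, rfl, hab, h0, ht, hsep⟩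
      have ha0 : a ≠ 0 := by rintro rfl; simp at h0
      have hb0 : b ≠ 0 := by rintro rfl; simp at h0
      obtain ⟨a, rfl⟩ := Fin.exists_succ_eq.2 ha0
      obtain ⟨b, rfl⟩ := Fin.exists_succ_eq.2 hb0
      exact ⟨a, b, (key a b fun h => hab (h ▸ rfl)).2 hsep, rfl⟩
    · rintro ⟨a, b, hab, rfl⟩
      obtain ⟨h1, h2, h3⟩ := hne a b hab
      refine ⟨a.succ, b.succ, rfl, fun h => h1 (Fin.succ_injective _ h), ?_, ?_,
        (key a b h1).1 hab⟩
      · simp [φ, (Fin.succ_ne_zero _).symm]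
      · simp [φ, Ne.symm h2, Ne.symm h3]
  rw [hsum, sepCount, hset, Set.ncard_coe_finset,
    Finset.card_eq_sum_card_image φ S, mul_comm, ← smul_eq_mul]
  symm
  refine Finset.sum_const_nat ?_
  intro e he
  obtain ⟨⟨a, b⟩, hab, rfl⟩ := Finset.mem_image.1 he
  have : (S.filter fun p => φ p = φ (a, b)) = {(a, b), (b, a)} := by
    ext ⟨c, d⟩
    simp only [Finset.mem_filter, Finset.mem_insert, Finset.mem_singleton]
    constructor
    · rintro ⟨hcd, h⟩
      exact hφ c d a b h (hne c d hcd).1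
    · rintro (h | h)
      · rw [h]; exact ⟨hab, rfl⟩
      · rw [h]; exact ⟨hsymm a b hab, Finset.pair_comm _ _⟩
  rw [this, Finset.card_pair]
  intro h
  exact (hne a b hab).1 (congrArg Prod.fst h)

theorem drawingCrossings_starGraph (f : Fin (n + 1) → Pt) :
    drawingCrossings (starGraph n) f = ∑ i : Fin n, sepCount f 0 i.succ := by
  classical
  have h : (starGraph n).edgeSet.toFinite.toFinset =
      Finset.univ.image fun i : Fin n => s((0 : Fin (n + 1)), i.succ) := by
    ext e
    simp only [starGraph, Set.Finite.mem_toFinset, SimpleGraph.edgeSet_fromEdgeSet, Set.mem_sdiff,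
      Set.mem_ofPred_eq, Finset.mem_image, Finset.mem_univ, true_and]
    constructor
    · rintro ⟨⟨i, rfl⟩, -⟩
      exact ⟨i, rfl⟩
    · rintro ⟨i, rfl⟩
      exact ⟨⟨i, rfl⟩, by simp [(Fin.succ_ne_zero i).symm]⟩
  unfold drawingCrossings
  rw [h, Finset.sum_image]
  · rfl
  · intro i _ j _ hij
    simpa using hij

theorem six_mul_drawingCrossings {f : Fin (n + 1) → Pt} (hf : Function.Injective f) :
    6 * drawingCrossings (starGraph n) f = ∑ a, ∑ b, ∑ t, (sepInd (centralArea f) a b t +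
      sepInd (centralArea f) b t a + sepInd (centralArea f) t a b) := by
  rw [sum_cyclic, drawingCrossings_starGraph, show 6 = 3 * 2 from rfl, mul_assoc, Finset.mul_sum]
  simp_rw [two_mul_sepCount hf]
  congr 1
  rw [Finset.sum_comm]
  exact Finset.sum_congr rfl fun a _ => Finset.sum_comm

theorem le_drawingCrossings_starGraph {k : ℕ} (hn : n = 2 * k) {f : Fin (n + 1) → Pt}
    (hf : IsRectDrawing f) : k * (k - 1) ^ 2 ≤ drawingCrossings (starGraph n) f := by
  have hs : Function.Injective (Fin.succ : Fin n → Fin (n + 1)) := Fin.succ_injective n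
  have hE0 : ∀ i j, i ≠ j → centralArea f i j ≠ 0 := fun i j hij =>
    hf.signedArea_ne_zero (Fin.succ_ne_zero i).symm (Fin.succ_ne_zero j).symm (hs.ne hij)
  have h1 := le_sum_posCount hn (centralArea_swap f) hE0
  have h2 : ∑ a, ∑ b, ∑ t, (leftInd (centralArea f) a b t +
      leftInd (centralArea f) b t a + leftInd (centralArea f) t a b) ≤
      6 * drawingCrossings (starGraph n) f := by
    rw [six_mul_drawingCrossings hf.1]
    refine Finset.sum_le_sum fun a _ => Finset.sum_le_sum fun b _ => Finset.sum_le_sum fun t _ => ?_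
    refine leftInd_cyclic_le_sepInd_cyclic (centralArea_swap f) hE0 (fun i j l hij hil hjl => ?_)
      a b t
    rw [centralArea_cyclic]
    exact hf.signedArea_ne_zero (hs.ne hij) (hs.ne hil) (hs.ne hjl)
  rw [three_mul_sum_leftInd] at h2
  linarith

theorem drawingCrossings_starGraph_eq {k : ℕ} (hn : n = 2 * k) {f : Fin (n + 1) → Pt}
    (hf : Function.Injective f) (hE0 : ∀ i j, i ≠ j → centralArea f i j ≠ 0)
    (hS : ∀ i j l, 0 < centralArea f i j → 0 < centralArea f j l → 0 < centralArea f i l →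
      0 < centralArea f i j + centralArea f j l + centralArea f l i)
    (hk : ∀ i, posCount (centralArea f) i = k ∨ posCount (centralArea f) i + 1 = k) :
    drawingCrossings (starGraph n) f = k * (k - 1) ^ 2 := by
  have h1 := sum_posCount_eq hn (centralArea_swap f) hE0 hk
  have h2 := six_mul_drawingCrossings hf
  simp_rw [sepInd_cyclic_eq_leftInd_cyclic (centralArea_swap f) hE0 hS] at h2
  rw [three_mul_sum_leftInd] at h2
  linarith

end Drawing

section RegularPolygon

variable {k : ℕ}

/-- The centre of a regular `(2k+1)`-gon together with all but one of its vertices. -/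
noncomputable def polygonStar (k : ℕ) : Fin (2 * k + 1) → Pt :=
  Fin.cons (0, 0) fun i : Fin (2 * k) =>
    (Real.cos (2 * Real.pi * (i : ℕ) / (2 * k + 1)), Real.sin (2 * Real.pi * (i : ℕ) / (2 * k + 1)))

theorem centralArea_polygonStar (i j : Fin (2 * k)) :
    centralArea (polygonStar k) i j =
      Real.sin (2 * Real.pi * (j : ℕ) / (2 * k + 1) - 2 * Real.pi * (i : ℕ) / (2 * k + 1)) := by
  simp only [centralArea, signedArea, polygonStar, Fin.cons_zero, Fin.cons_succ, Real.sin_sub]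
  ring

theorem centralArea_polygonStar_pos {i j : Fin (2 * k)}
    (h : (i < j ∧ (j : ℕ) ≤ i + k) ∨ (j : ℕ) + k < i) :
    0 < centralArea (polygonStar k) i j := by
  rw [centralArea_polygonStar]
  have hm : (0 : ℝ) < 2 * k + 1 := by positivity
  have hπ := Real.pi_pos
  rw [← sub_div]
  rcases h with ⟨h1, h2⟩ | h1
  · have h1' : (i : ℝ) < (j : ℝ) := by exact_mod_cast h1
    have h2' : ((j : ℕ) : ℝ) ≤ (i : ℕ) + k := by exact_mod_cast h2
    apply Real.sin_pos_of_pos_of_lt_pi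
    · apply div_pos _ hm
      nlinarith
    · rw [div_lt_iff₀ hm]
      nlinarith
  · have h1' : ((j : ℕ) : ℝ) + k + 1 ≤ (i : ℕ) := by exact_mod_cast h1
    have h2' : ((i : ℕ) : ℝ) + 1 ≤ 2 * k := by exact_mod_cast i.isLt
    have hj : (0 : ℝ) ≤ (j : ℕ) := by positivity
    rw [← Real.sin_add_two_pi]
    apply Real.sin_pos_of_pos_of_lt_pi
    · rw [← sub_lt_iff_lt_add, zero_sub, lt_div_iff₀ hm]
      nlinarith
    · rw [← lt_sub_iff_add_lt, div_lt_iff₀ hm]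
      nlinarith

theorem centralArea_polygonStar_pos_iff (i j : Fin (2 * k)) :
    0 < centralArea (polygonStar k) i j ↔ (i < j ∧ (j : ℕ) ≤ i + k) ∨ (j : ℕ) + k < i := by
  refine ⟨fun h => ?_, centralArea_polygonStar_pos⟩
  by_contra hn
  rcases eq_or_ne i j with rfl | hij
  · simp [centralArea_polygonStar] at h
  · have := centralArea_polygonStar_pos (i := j) (j := i) (by
      have : (i : ℕ) ≠ j := Fin.val_ne_of_ne hij
      rw [Fin.lt_def] at hn ⊢
      omega)
    linarith [centralArea_swap (polygonStar k) i j]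

theorem centralArea_polygonStar_ne_zero {i j : Fin (2 * k)} (hij : i ≠ j) :
    centralArea (polygonStar k) i j ≠ 0 := by
  intro h
  have h1 := centralArea_polygonStar_pos_iff i j
  have h2 := centralArea_polygonStar_pos_iff j i
  rw [centralArea_swap, h] at h2
  rw [h] at h1
  simp only [neg_zero, lt_irrefl, false_iff, Fin.lt_def] at h1 h2
  have : (i : ℕ) ≠ j := Fin.val_ne_of_ne hij
  omega

theorem posCount_polygonStar (i : Fin (2 * k)) :
    posCount (centralArea (polygonStar k)) i = k ∨
      posCount (centralArea (polygonStar k)) i + 1 = k := by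
  have hi := i.isLt
  have himg : posCount (centralArea (polygonStar k)) i =
      ((Finset.range (2 * k)).filter fun j => ((i : ℕ) < j ∧ j ≤ i + k) ∨ j + k < i).card := by
    rw [posCount, ← Set.ncard_image_of_injective _ Fin.val_injective, ← Set.ncard_coe_finset]
    congr 1
    ext j
    simp only [centralArea_polygonStar_pos_iff, Set.mem_image, Set.mem_ofPred_eq, Finset.coe_filter,
      Finset.mem_range, Fin.lt_def]
    constructor
    · rintro ⟨j, h, rfl⟩
      exact ⟨j.isLt, h⟩
    · rintro ⟨hj, h⟩
      exact ⟨⟨j, hj⟩, h, rfl⟩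
  rw [himg]
  rcases lt_or_ge (i : ℕ) k with hik | hik
  · left
    have : ((Finset.range (2 * k)).filter fun j => ((i : ℕ) < j ∧ j ≤ i + k) ∨ j + k < i) =
        Finset.Ioc (i : ℕ) (i + k) := by
      ext j
      simp only [Finset.mem_filter, Finset.mem_range, Finset.mem_Ioc]
      omega
    rw [this, Nat.card_Ioc]
    omega
  · right
    have : ((Finset.range (2 * k)).filter fun j => ((i : ℕ) < j ∧ j ≤ i + k) ∨ j + k < i) =
        Finset.Ioo (i : ℕ) (2 * k) ∪ Finset.range (i - k) := by
      ext j
      simp only [Finset.mem_filter, Finset.mem_range, Finset.mem_union, Finset.mem_Ioo]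
      omega
    rw [this, Finset.card_union_of_disjoint, Nat.card_Ioo, Finset.card_range]
    · omega
    · rw [Finset.disjoint_left]
      intro j h1 h2
      simp only [Finset.mem_range, Finset.mem_Ioo] at h1 h2
      omega

theorem centralArea_polygonStar_convex {i j l : Fin (2 * k)}
    (hij : 0 < centralArea (polygonStar k) i j) (hjl : 0 < centralArea (polygonStar k) j l) :
    0 < centralArea (polygonStar k) i j + centralArea (polygonStar k) j l +
      centralArea (polygonStar k) l i := by
  rw [centralArea_swap _ i l]
  rw [centralArea_polygonStar] at *
  rw [centralArea_polygonStar] at *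
  rw [centralArea_polygonStar]
  set a := 2 * Real.pi * (i : ℕ) / (2 * k + 1)
  set b := 2 * Real.pi * (j : ℕ) / (2 * k + 1)
  set c := 2 * Real.pi * (l : ℕ) / (2 * k + 1)
  have hsum : Real.sin (c - a) =
      Real.sin (b - a) * Real.cos (c - b) + Real.cos (b - a) * Real.sin (c - b) := by
    rw [← Real.sin_add]
    congr 1
    ring
  have h1 : Real.cos (c - b) < 1 := by
    nlinarith [Real.sin_sq_add_cos_sq (c - b), Real.cos_le_one (c - b)]
  have h2 := Real.cos_le_one (b - a)
  nlinarith

theorem isRectDrawing_polygonStar (k : ℕ) : IsRectDrawing (polygonStar k) := by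
  have hinj : Function.Injective (polygonStar k) := by
    have h0 : ∀ i : Fin (2 * k), polygonStar k 0 ≠ polygonStar k i.succ := fun i h => by
      simp only [polygonStar, Fin.cons_zero, Fin.cons_succ, Prod.mk.injEq] at h
      have := Real.sin_sq_add_cos_sq (2 * Real.pi * (i : ℕ) / (2 * k + 1))
      rw [← h.1, ← h.2] at this
      norm_num at this
    intro i j h
    cases i using Fin.cases with
    | zero =>
      cases j using Fin.cases with
      | zero => rfl
      | succ j => exact absurd h (h0 j)
    | succ i =>
      cases j using Fin.cases with
      | zero => exact absurd h.symm (h0 i)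
      | succ j =>
        by_contra hij
        refine centralArea_polygonStar_ne_zero (fun h' => hij (congrArg Fin.succ h')) ?_
        rw [centralArea, ← h, signedArea]
        ring
  refine ⟨hinj, Set.finite_range _, ?_⟩
  rintro _ ⟨i, rfl⟩ _ ⟨j, rfl⟩ _ ⟨l, rfl⟩ hij hil hjl
  rw [collinear_iff_signedArea_eq_zero hij]
  replace hij := ne_of_apply_ne _ hij
  replace hil := ne_of_apply_ne _ hil
  replace hjl := ne_of_apply_ne _ hjl
  have hrot : ∀ p q r : Pt, signedArea p q r = signedArea q r p := fun p q r => by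
    unfold signedArea
    ring
  have hne : ∀ {i j : Fin (2 * k)}, i.succ ≠ j.succ →
      signedArea (polygonStar k 0) (polygonStar k i.succ) (polygonStar k j.succ) ≠ 0 :=
    fun h => centralArea_polygonStar_ne_zero (ne_of_apply_ne _ h)
  cases i using Fin.cases with
  | zero =>
    obtain ⟨j, rfl⟩ := Fin.exists_succ_eq.2 hij.symm
    obtain ⟨l, rfl⟩ := Fin.exists_succ_eq.2 hil.symm
    exact hne hjl
  | succ i =>
    cases j using Fin.cases with
    | zero =>
      obtain ⟨l, rfl⟩ := Fin.exists_succ_eq.2 hjl.symm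
      rw [hrot]
      exact hne hil.symm
    | succ j =>
      cases l using Fin.cases with
      | zero =>
        rw [← hrot]
        exact hne hij
      | succ l =>
        rw [← centralArea_cyclic]
        have h1 := hne hij
        have h2 := hne hjl
        have h3 := hne hil.symm
        have s1 := @centralArea_polygonStar_convex k i j l
        have s2 := @centralArea_polygonStar_convex k j l i
        have s3 := @centralArea_polygonStar_convex k l i j
        have s4 := @centralArea_polygonStar_convex k l j i
        have s5 := @centralArea_polygonStar_convex k j i l
        have s6 := @centralArea_polygonStar_convex k i l j
        rw [← centralArea] at h1 h2 h3
        simp only [centralArea_swap _ l i, centralArea_swap _ i j, centralArea_swap _ j l]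
          at s1 s2 s3 s4 s5 s6
        grind

end RegularPolygon

/-- For even n ≥ 2, `OCN(K_{n,1}) = n(n-2)²/8`. -/
theorem stmt_5 (n : ℕ) (hn : 2 ≤ n) (heven : Even n) :
    OCN (starGraph n) = n * (n - 2) ^ 2 / 8 := by
  obtain ⟨k, hk⟩ := heven
  obtain rfl : n = 2 * k := by omega
  have hval : 2 * k * (2 * k - 2) ^ 2 / 8 = k * (k - 1) ^ 2 := by
    obtain ⟨m, rfl⟩ : ∃ m, k = m + 1 := ⟨k - 1, by omega⟩
    rw [show 2 * (m + 1) - 2 = 2 * m by omega, Nat.add_sub_cancel]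
    exact Nat.div_eq_of_eq_mul_left (by norm_num) (by ring)
  rw [hval]
  have hf := isRectDrawing_polygonStar k
  refine IsLeast.csInf_eq ⟨⟨polygonStar k, hf, ?_⟩, ?_⟩
  · exact drawingCrossings_starGraph_eq rfl hf.1 (fun i j => centralArea_polygonStar_ne_zero)
      (fun i j l hij hjl _ => centralArea_polygonStar_convex hij hjl) posCount_polygonStar
  · rintro m ⟨f, hf, rfl⟩
    exact le_drawingCrossings_starGraph rfl hf
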